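/- Let X_n be a reversible Markov chain on a countable state space with reversing measure π satisfying π(x) ≥ 1 for all x in the range of the chain up to time t. Then (Carne–Varopoulos bound) for any states x, y and time n: P^x(X_n = y) ≤ 2 √(π(y)/π(x)) · exp(−d(x,y)²/(2n)), where d is the graph distance induced by the transition structure. -/

import Mathlib

/-!
On `ℓ²(S)` the kernel `√(P x y) √(P y x)` acts as a self-adjoint contraction `A`, and reversibility
makes it conjugate to `P`: `⟨δ_x, A ^ n δ_y⟩ = √(π x / π y) P ^ n(x, y)`. Expand `X ^ n` in
Chebyshev polynomials, `X ^ n = 𝔼 T_{W_n}` for the simple random walk `W` on `ℤ`. Each `T_k(A)` is a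
contraction, by the Pell identity `T_k ^ 2 + (1 - X ^ 2) U_{k-1} ^ 2 = 1`, and
`⟨δ_x, T_k(A) δ_y⟩ = 0` for `|k| < d(x, y)`. So the matrix entry of `A ^ n` is at most the
probability that `|W_n| ≥ d(x, y)`, and Chernoff's argument bounds it: since
`cosh(l (k + 1)) + cosh(l (k - 1)) = 2 cosh(l) cosh(l k)`, the weights `cosh(l k)` grow by a factor
`cosh(l) ≤ exp(l ^ 2 / 2)` at each step of the walk.
-/

open Polynomial Polynomial.Chebyshev
open scoped lp RealInnerProductSpace InnerProduct

section Chebyshev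

theorem chebyshev_T_sq_add_one_sub_X_sq_mul_U_sq (R : Type*) [CommRing R] (n : ℤ) :
    T R (n + 1) ^ 2 + (1 - X ^ 2) * U R n ^ 2 = 1 := by
  have hU : U R n ^ 2 + U R (n + 1) ^ 2 - 2 * X * U R n * U R (n + 1) = 1 := by
    have hS := congr_arg (Polynomial.comp · (2 * X)) (S_sq_add_S_sq R n)
    simpa only [sub_comp, add_comp, mul_comp, pow_comp, one_comp, X_comp, S_comp_two_mul_X] using hS
  have hT : T R (n + 1) = U R (n + 1) - X * U R n := by
    rw [U_eq_X_mul_U_add_T, add_sub_cancel_left]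
  rw [hT]
  linear_combination hU

theorem two_mul_X_mul_chebyshev_T (R : Type*) [CommRing R] (k : ℤ) :
    2 * (X * T R k) = T R (k + 1) + T R (k - 1) := by
  rw [T_add_one]
  ring

theorem map_eq_zero_of_natDegree_lt {R M : Type*} [Semiring R] [AddCommMonoid M] [Module R M]
    (φ : R[X] →ₗ[R] M) {d : ℕ} (hφ : ∀ k < d, φ (X ^ k) = 0) {p : R[X]} (hp : p.natDegree < d) :
    φ p = 0 := by
  rw [p.as_sum_range_C_mul_X_pow, map_sum]
  refine Finset.sum_eq_zero fun i hi ↦ ?_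
  rw [Finset.mem_range] at hi
  rw [← smul_eq_C_mul, map_smul, hφ i (by lia), smul_zero]

theorem one_le_two_mul_exp_neg_mul_cosh {s t : ℝ} (h : s ≤ |t|) :
    1 ≤ 2 * Real.exp (-s) * Real.cosh t := by
  have hcosh : Real.exp s ≤ 2 * Real.cosh t := by
    rw [← Real.cosh_abs, Real.cosh_eq]
    linarith [Real.exp_le_exp.2 h, Real.exp_pos (-|t|)]
  calc 1 = Real.exp (-s) * Real.exp s := by rw [← Real.exp_add, neg_add_cancel, Real.exp_zero]
    _ ≤ Real.exp (-s) * (2 * Real.cosh t) := by gcongr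
    _ = 2 * Real.exp (-s) * Real.cosh t := by ring

variable {F : Type*} [SeminormedAddCommGroup F] [NormedSpace ℝ F]

theorem norm_map_chebyshev_T_le (φ : ℝ[X] →ₗ[ℝ] F) {d : ℕ} {c l : ℝ} (hl : 0 ≤ l)
    (hT : ∀ k, ‖φ (T ℝ k)‖ ≤ c) (hX : ∀ k < d, φ (X ^ k) = 0) (k : ℤ) :
    ‖φ (T ℝ k)‖ ≤ 2 * c * Real.exp (-(l * d)) * Real.cosh (l * k) := by
  have hc : 0 ≤ c := (norm_nonneg _).trans (hT 0)
  rcases lt_or_ge k.natAbs d with hk | hk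
  · rw [map_eq_zero_of_natDegree_lt φ hX (by rwa [natDegree_T]), norm_zero]
    positivity
  · have hlk : l * d ≤ |l * k| := by
      rw [abs_mul, abs_of_nonneg hl, ← Int.cast_abs, Int.abs_eq_natAbs, Int.cast_natCast]
      gcongr
    calc ‖φ (T ℝ k)‖ ≤ c * 1 := by simpa using hT k
      _ ≤ c * (2 * Real.exp (-(l * d)) * Real.cosh (l * k)) := by
        gcongr
        exact one_le_two_mul_exp_neg_mul_cosh hlk
      _ = 2 * c * Real.exp (-(l * d)) * Real.cosh (l * k) := by ring

theorem norm_map_X_pow_mul_chebyshev_T_le (φ : ℝ[X] →ₗ[ℝ] F) {d : ℕ} {c l : ℝ} (hl : 0 ≤ l)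
    (hT : ∀ k, ‖φ (T ℝ k)‖ ≤ c) (hX : ∀ k < d, φ (X ^ k) = 0) (m : ℕ) (k : ℤ) :
    ‖φ (X ^ m * T ℝ k)‖ ≤
      2 * c * Real.exp (-(l * d)) * Real.cosh l ^ m * Real.cosh (l * k) := by
  induction m generalizing k with
  | zero => simpa using norm_map_chebyshev_T_le φ hl hT hX k
  | succ m ih =>
    have hrec : (2 : ℝ) • φ (X ^ (m + 1) * T ℝ k) =
        φ (X ^ m * T ℝ (k + 1)) + φ (X ^ m * T ℝ (k - 1)) := by
      rw [two_smul, ← map_add, ← map_add]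
      congr 1
      linear_combination X ^ m * two_mul_X_mul_chebyshev_T ℝ k
    have hcosh : Real.cosh (l * (k + 1 : ℤ)) + Real.cosh (l * (k - 1 : ℤ)) =
        2 * (Real.cosh l * Real.cosh (l * k)) := by
      push_cast
      rw [mul_add, mul_sub, mul_one, Real.cosh_add, Real.cosh_sub]
      ring
    have htwo : 2 * ‖φ (X ^ (m + 1) * T ℝ k)‖ ≤
        ‖φ (X ^ m * T ℝ (k + 1))‖ + ‖φ (X ^ m * T ℝ (k - 1))‖ := by
      rw [← Real.norm_two, ← norm_smul, hrec]
      exact norm_add_le _ _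
    rw [pow_succ (Real.cosh l)]
    linear_combination (htwo + ih (k + 1) + ih (k - 1) +
      2 * c * Real.exp (-(l * d)) * Real.cosh l ^ m * hcosh) / 2

theorem norm_map_X_pow_le (φ : ℝ[X] →ₗ[ℝ] F) {d : ℕ} {c : ℝ} (hT : ∀ k, ‖φ (T ℝ k)‖ ≤ c)
    (hX : ∀ k < d, φ (X ^ k) = 0) {n : ℕ} (hn : 0 < n) :
    ‖φ (X ^ n)‖ ≤ 2 * c * Real.exp (-(d : ℝ) ^ 2 / (2 * n)) := by
  have hc : 0 ≤ c := (norm_nonneg _).trans (hT 0)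
  -- `l = d / n` minimises `n * l ^ 2 / 2 - l * d`.
  set l : ℝ := d / n with hl
  calc ‖φ (X ^ n)‖ ≤ 2 * c * Real.exp (-(l * d)) * Real.cosh l ^ n := by
        simpa using norm_map_X_pow_mul_chebyshev_T_le φ (by positivity : 0 ≤ l) hT hX n 0
    _ ≤ 2 * c * Real.exp (-(l * d)) * Real.exp (l ^ 2 / 2) ^ n := by
        gcongr
        exact Real.cosh_le_exp_half_sq l
    _ = 2 * c * Real.exp (-(d : ℝ) ^ 2 / (2 * n)) := by
        rw [← Real.exp_nat_mul, mul_assoc, ← Real.exp_add, hl]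
        congr 2
        field_simp
        ring

end Chebyshev

section SymmetricContraction

variable {E : Type*} [NormedAddCommGroup E] [InnerProductSpace ℝ E] {A : E →ₗ[ℝ] E}

theorem isSymmetric_aeval (hA : A.IsSymmetric) (p : ℝ[X]) : (aeval A p).IsSymmetric := by
  induction p using Polynomial.induction_on' with
  | add p q hp hq => rw [map_add]; exact hp.add hq
  | monomial n c =>
    rw [aeval_monomial, ← Algebra.smul_def]
    exact (hA.pow n).smul rfl

theorem norm_aeval_apply_sq (hA : A.IsSymmetric) (p : ℝ[X]) (v : E) :
    ‖aeval A p v‖ ^ 2 = ⟪v, aeval A (p ^ 2) v⟫ := by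
  rw [← real_inner_self_eq_norm_sq, isSymmetric_aeval hA, map_pow, sq, Module.End.mul_apply]

theorem norm_aeval_chebyshev_T_apply_le (hA : A.IsSymmetric) (hA_le : ∀ v, ‖A v‖ ≤ ‖v‖) (k : ℤ)
    (v : E) : ‖aeval A (T ℝ k) v‖ ≤ ‖v‖ := by
  have hAU : ‖aeval A (X * U ℝ (k - 1)) v‖ ≤ ‖aeval A (U ℝ (k - 1)) v‖ := by
    rw [map_mul, aeval_X, Module.End.mul_apply]
    exact hA_le _
  have hpell : ‖aeval A (T ℝ k) v‖ ^ 2 + ‖aeval A (U ℝ (k - 1)) v‖ ^ 2 =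
      ‖v‖ ^ 2 + ‖aeval A (X * U ℝ (k - 1)) v‖ ^ 2 := by
    have h := chebyshev_T_sq_add_one_sub_X_sq_mul_U_sq ℝ (k - 1)
    rw [sub_add_cancel] at h
    have h' : T ℝ k ^ 2 + U ℝ (k - 1) ^ 2 = 1 + (X * U ℝ (k - 1)) ^ 2 := by
      linear_combination h
    simp only [norm_aeval_apply_sq hA, ← real_inner_self_eq_norm_sq v, ← inner_add_right,
      ← LinearMap.add_apply, ← map_add, h']
    simp
  refine le_of_sq_le_sq ?_ (norm_nonneg v)
  linarith [pow_le_pow_left₀ (norm_nonneg _) hAU 2]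

theorem abs_inner_pow_apply_le (hA : A.IsSymmetric) (hA_le : ∀ v, ‖A v‖ ≤ ‖v‖) {u v : E} {d : ℕ}
    (hd : ∀ k < d, ⟪u, (A ^ k) v⟫ = 0) {n : ℕ} (hn : 0 < n) :
    |⟪u, (A ^ n) v⟫| ≤ 2 * (‖u‖ * ‖v‖) * Real.exp (-(d : ℝ) ^ 2 / (2 * n)) := by
  let φ : ℝ[X] →ₗ[ℝ] ℝ := innerₛₗ ℝ u ∘ₗ LinearMap.applyₗ v ∘ₗ (aeval A).toLinearMap
  have hφ (p : ℝ[X]) : φ p = ⟪u, aeval A p v⟫ := rfl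
  have hφT (k : ℤ) : ‖φ (T ℝ k)‖ ≤ ‖u‖ * ‖v‖ :=
    (norm_inner_le_norm _ _).trans <| by
      gcongr
      exact norm_aeval_chebyshev_T_apply_le hA hA_le k v
  simpa [hφ] using norm_map_X_pow_le φ hφT (fun k hk ↦ by simpa [hφ] using hd k hk) hn

end SymmetricContraction

section SquareSummable

variable {ι : Type*}

theorem memℓp_two_of_summable_sq {f : ι → ℝ} (hf : Summable fun i ↦ f i ^ 2) : Memℓp f 2 :=
  memℓp_gen (by simpa using hf)

theorem hasSum_sq_norm_sq (f : ℓ²(ι, ℝ)) : HasSum (fun i ↦ f i ^ 2) (‖f‖ ^ 2) := by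
  simpa using lp.hasSum_norm (p := 2) (by norm_num) f

/-- The unitary involution of `ℓ²(ι × ι)` reversing the orientation of each pair. -/
noncomputable def swapL2 (ι : Type*) : ℓ²(ι × ι, ℝ) →ₗᵢ[ℝ] ℓ²(ι × ι, ℝ) where
  toFun f := ⟨fun p ↦ f p.swap, memℓp_two_of_summable_sq <|
    (Equiv.prodComm ι ι).summable_iff.2 (hasSum_sq_norm_sq f).summable⟩
  map_add' _ _ := rfl
  map_smul' _ _ := rfl
  norm_map' f := by
    rw [← sq_eq_sq₀ (norm_nonneg _) (norm_nonneg _), ← (hasSum_sq_norm_sq f).tsum_eq,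
      ← (hasSum_sq_norm_sq _).tsum_eq]
    exact (Equiv.prodComm ι ι).tsum_eq fun p ↦ f p ^ 2

@[simp]
theorem swapL2_apply (f : ℓ²(ι × ι, ℝ)) (p : ι × ι) : swapL2 ι f p = f p.swap := rfl

theorem isSelfAdjoint_swapL2 : IsSelfAdjoint (swapL2 ι).toContinuousLinearMap := by
  refine ContinuousLinearMap.isSelfAdjoint_iff_isSymmetric.2 fun f g ↦ ?_
  exact (Equiv.prodComm ι ι).tsum_eq fun p ↦ ⟪f p, g p.swap⟫

end SquareSummable

/-- A nonnegative kernel whose rows have total mass at most one; a row sum below one is the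
probability of being killed at that step. -/
structure IsSubstochastic {α β : Type*} (P : α → β → ℝ) : Prop where
  nonneg : ∀ x y, 0 ≤ P x y
  summable : ∀ x, Summable (P x)
  tsum_le_one : ∀ x, ∑' y, P x y ≤ 1

namespace IsSubstochastic

theorem of_tsum_eq_one {α β : Type*} {P : α → β → ℝ} (hnonneg : ∀ x y, 0 ≤ P x y)
    (hsum : ∀ x, ∑' y, P x y = 1) : IsSubstochastic P where
  nonneg := hnonneg
  summable x := by
    -- A divergent `tsum` is `0`, so the value `1` forces convergence.
    by_contra h
    exact zero_ne_one ((tsum_eq_zero_of_not_summable h).symm.trans (hsum x))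
  tsum_le_one x := (hsum x).le

section EdgeLift

variable {α β : Type*} {P : α → β → ℝ}

theorem tsum_edge_sq_le (hP : IsSubstochastic P) (f : α → ℝ) (x : α) :
    ∑' y, (√(P x y) * f x) ^ 2 ≤ f x ^ 2 := by
  simp only [mul_pow, Real.sq_sqrt (hP.nonneg x _), tsum_mul_right]
  exact mul_le_of_le_one_left (sq_nonneg _) (hP.tsum_le_one x)

theorem summable_edge_sq (hP : IsSubstochastic P) (f : ℓ²(α, ℝ)) :
    Summable fun p : α × β ↦ (√(P p.1 p.2) * f p.1) ^ 2 := by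
  refine (summable_prod_of_nonneg fun _ ↦ sq_nonneg _).2 ⟨fun x ↦ ?_, ?_⟩
  · simpa only [mul_pow, Real.sq_sqrt (hP.nonneg x _)] using (hP.summable x).mul_right _
  · exact (hasSum_sq_norm_sq f).summable.of_nonneg_of_le
      (fun x ↦ tsum_nonneg fun y ↦ sq_nonneg _) (hP.tsum_edge_sq_le f)

/-- The lift of functions on vertices to functions on edges, sending `f` to
`(x, y) ↦ √(P x y) * f x`. It is a contraction of `ℓ²` spaces because rows have mass at most one. -/
noncomputable def edgeLift (hP : IsSubstochastic P) : ℓ²(α, ℝ) →L[ℝ] ℓ²(α × β, ℝ) :=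
  LinearMap.mkContinuous
    { toFun f := ⟨fun p ↦ √(P p.1 p.2) * f p.1, memℓp_two_of_summable_sq (hP.summable_edge_sq f)⟩
      map_add' f g := lp.ext <| funext fun p ↦ mul_add _ _ _
      map_smul' c f := lp.ext <| funext fun p ↦ mul_left_comm _ _ _ }
    1 fun f ↦ by
      rw [one_mul]
      refine le_of_sq_le_sq ?_ (norm_nonneg f)
      rw [← (hasSum_sq_norm_sq f).tsum_eq, ← (hasSum_sq_norm_sq _).tsum_eq]
      have hsum := hP.summable_edge_sq f
      exact hsum.tsum_prod.trans_le <|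
        hsum.prod.tsum_le_tsum (hP.tsum_edge_sq_le f) (hasSum_sq_norm_sq f).summable

@[simp]
theorem edgeLift_apply (hP : IsSubstochastic P) (f : ℓ²(α, ℝ)) (p : α × β) :
    hP.edgeLift f p = √(P p.1 p.2) * f p.1 := rfl

theorem norm_edgeLift_le (hP : IsSubstochastic P) : ‖hP.edgeLift‖ ≤ 1 :=
  LinearMap.mkContinuous_norm_le _ zero_le_one _

theorem adjoint_edgeLift_apply (hP : IsSubstochastic P) (g : ℓ²(α × β, ℝ)) (x : α) :
    ((hP.edgeLift†) g) x = ∑' y, √(P x y) * g (x, y) := by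
  classical
  let δ : ℓ²(α, ℝ) := lp.single 2 x 1
  have hsum : Summable fun p ↦ ⟪hP.edgeLift δ p, g p⟫ := lp.summable_inner _ g
  calc ((hP.edgeLift†) g) x = ⟪δ, (hP.edgeLift†) g⟫ := by simp [δ, lp.inner_single_left]
    _ = ⟪hP.edgeLift δ, g⟫ := ContinuousLinearMap.adjoint_inner_right ..
    _ = ∑' z, ∑' y, ⟪hP.edgeLift δ (z, y), g (z, y)⟫ := hsum.tsum_prod
    _ = ∑' y, ⟪hP.edgeLift δ (x, y), g (x, y)⟫ :=
      tsum_eq_single x fun z hz ↦ by simp [δ, hz]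
    _ = ∑' y, √(P x y) * g (x, y) := by simp [δ, mul_comm]

end EdgeLift

variable {S : Type*} {P : S → S → ℝ}

/-- The operator on `ℓ²(S)` with kernel `√(P x y) * √(P y x)`, factored through the edges so that
it is visibly a self-adjoint contraction. For a reversible chain it is conjugate to `P`. -/
noncomputable def symmetrization (hP : IsSubstochastic P) : ℓ²(S, ℝ) →L[ℝ] ℓ²(S, ℝ) :=
  hP.edgeLift† ∘L (swapL2 S).toContinuousLinearMap ∘L hP.edgeLift

theorem symmetrization_apply (hP : IsSubstochastic P) (f : ℓ²(S, ℝ)) (x : S) :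
    hP.symmetrization f x = ∑' y, √(P x y) * √(P y x) * f y := by
  simp [symmetrization, adjoint_edgeLift_apply, mul_assoc]

theorem isSymmetric_symmetrization (hP : IsSubstochastic P) :
    (hP.symmetrization : ℓ²(S, ℝ) →ₗ[ℝ] ℓ²(S, ℝ)).IsSymmetric :=
  ContinuousLinearMap.isSelfAdjoint_iff_isSymmetric.1 (isSelfAdjoint_swapL2.adjoint_conj _)

theorem norm_symmetrization_apply_le (hP : IsSubstochastic P) (f : ℓ²(S, ℝ)) :
    ‖hP.symmetrization f‖ ≤ ‖f‖ := by
  have hlift (f) : ‖hP.edgeLift f‖ ≤ ‖f‖ := by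
    simpa using hP.edgeLift.le_of_opNorm_le hP.norm_edgeLift_le f
  have hadj (g) : ‖(hP.edgeLift†) g‖ ≤ ‖g‖ := by
    simpa using (hP.edgeLift†).le_of_opNorm_le
      ((LinearIsometryEquiv.norm_map _ _).trans_le hP.norm_edgeLift_le) g
  exact (hadj _).trans (((swapL2 S).norm_map _).trans_le (hlift f))

end IsSubstochastic

section Reversible

variable {S : Type*} {P : S → S → ℝ} {π : S → ℝ}

theorem sqrt_mul_sqrt_eq_of_reversible (hP : ∀ x y, 0 ≤ P x y) (hπ : ∀ x, 0 < π x)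
    (hrev : ∀ x y, π x * P x y = π y * P y x) (x y : S) :
    √(P x y) * √(P y x) = √(π x) / √(π y) * P x y := by
  have hPyx : P y x = π x / π y * P x y := by
    rw [div_mul_eq_mul_div, hrev, mul_div_cancel_left₀ _ (hπ y).ne']
  rw [hPyx, Real.sqrt_mul (div_pos (hπ x) (hπ y)).le, Real.sqrt_div (hπ x).le, mul_left_comm,
    Real.mul_self_sqrt (hP x y)]

theorem symmetrization_pow_single_apply [DecidableEq S] (hP : IsSubstochastic P)
    (hπ : ∀ x, 0 < π x) (hrev : ∀ x y, π x * P x y = π y * P y x) {Pn : ℕ → S → S → ℝ}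
    (hPn0 : ∀ x y, Pn 0 x y = if x = y then 1 else 0)
    (hPnS : ∀ n x y, Pn (n + 1) x y = ∑' z, P x z * Pn n z y) (n : ℕ) (x y : S) :
    ((hP.symmetrization : ℓ²(S, ℝ) →ₗ[ℝ] ℓ²(S, ℝ)) ^ n) (lp.single 2 y 1) x =
      √(π x) / √(π y) * Pn n x y := by
  have hsqrt (z : S) : √(π z) ≠ 0 := (Real.sqrt_pos.2 (hπ z)).ne'
  induction n generalizing x with
  | zero =>
    rcases eq_or_ne x y with rfl | hxy
    · simp [hPn0, hsqrt x]
    · simp [hPn0, hxy]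
  | succ n ih =>
    rw [pow_succ', Module.End.mul_apply, ContinuousLinearMap.coe_coe, hP.symmetrization_apply,
      hPnS, ← tsum_mul_left]
    refine tsum_congr fun z ↦ ?_
    rw [ih, sqrt_mul_sqrt_eq_of_reversible hP.nonneg hπ hrev]
    have := hsqrt z
    field_simp

theorem stmt_4_general [DecidableEq S] (hP : IsSubstochastic P) (hπ : ∀ x, 0 < π x)
    (hrev : ∀ x y, π x * P x y = π y * P y x) {Pn : ℕ → S → S → ℝ}
    (hPn0 : ∀ x y, Pn 0 x y = if x = y then 1 else 0)
    (hPnS : ∀ n x y, Pn (n + 1) x y = ∑' z, P x z * Pn n z y)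
    {x y : S} {d : ℕ} (hd : ∀ k < d, Pn k x y = 0) {n : ℕ} (hn : 0 < n) :
    Pn n x y ≤ 2 * √(π y / π x) * Real.exp (-(d : ℝ) ^ 2 / (2 * n)) := by
  let A : ℓ²(S, ℝ) →ₗ[ℝ] ℓ²(S, ℝ) := hP.symmetrization
  have hentry (k : ℕ) :
      ⟪lp.single 2 x (1 : ℝ), (A ^ k) (lp.single 2 y 1)⟫ = √(π x) / √(π y) * Pn k x y := by
    rw [lp.inner_single_left, symmetrization_pow_single_apply hP hπ hrev hPn0 hPnS]
    simp
  have hbound : √(π x) / √(π y) * Pn n x y ≤ 2 * Real.exp (-(d : ℝ) ^ 2 / (2 * n)) := by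
    have h := abs_inner_pow_apply_le hP.isSymmetric_symmetrization hP.norm_symmetrization_apply_le
      (fun k hk ↦ (hentry k).trans (by rw [hd k hk, mul_zero])) hn
    rw [hentry] at h
    simpa [lp.norm_single] using (le_abs_self _).trans h
  have hx := Real.sqrt_pos.2 (hπ x)
  have hy := Real.sqrt_pos.2 (hπ y)
  rw [Real.sqrt_div (hπ y).le]
  rw [div_mul_eq_mul_div, div_le_iff₀ hy] at hbound
  rw [mul_div_assoc', div_mul_eq_mul_div, le_div_iff₀ hx]
  linarith

end Reversible

/-- Carne–Varopoulos bound for a reversible Markov chain on a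
countable state space with reversing measure `π ≥ 1`:
`P^x(X_n = y) ≤ 2 √(π(y)/π(x)) exp(−d(x,y)²/(2n))`, where `d` is the graph
distance induced by the transition structure. -/
theorem stmt_4 {S : Type*} [Countable S] [DecidableEq S]
    (P : S → S → ℝ) (hPnn : ∀ x y, 0 ≤ P x y) (hProw : ∀ x, ∑' y, P x y = 1)
    (π : S → ℝ) (hπ : ∀ x, 1 ≤ π x)
    (hrev : ∀ x y, π x * P x y = π y * P y x)
    (Pn : ℕ → S → S → ℝ)
    (hPn0 : ∀ x y, Pn 0 x y = if x = y then 1 else 0)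
    (hPnS : ∀ n x y, Pn (n + 1) x y = ∑' z, P x z * Pn n z y)
    (dist : S → S → ℕ)
    (hdist : ∀ x y, 0 < Pn (dist x y) x y ∧ ∀ k < dist x y, Pn k x y = 0) :
    ∀ x y : S, ∀ n : ℕ, 0 < n →
      Pn n x y ≤ 2 * Real.sqrt (π y / π x) *
        Real.exp (-(dist x y : ℝ) ^ 2 / (2 * n)) :=
  fun x y _ ↦ stmt_4_general (.of_tsum_eq_one hPnn hProw) (fun z ↦ one_pos.trans_le (hπ z)) hrev
    hPn0 hPnS (hdist x y).2
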